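/- Let g(x) denote the number of ordered pairs of positive integers (a, b) with a > b, a*b ≤ 2x, and such that there exists a positive integer c with a^2 + b^2 = c^2 and gcd(b, c) = 1 (i.e. the number, counted with multiplicity, of i-congruent numbers at most x arising from the degenerate case d = 0 with a > b). Then there exists a constant C > 0 such that for all sufficiently large real x: sqrt(x)/2 - C ≤ g(x) ≤ x^(2/3)/(2 * 4^(1/3)) + C * x^(5/9). -/

import Mathlib

/-- The number of ordered pairs `(a, b)` of positive integers with `a > b`, `a * b ≤ 2 x`,
such that `a, b` are the legs of a Pythagorean triangle `a² + b² = c²` with `gcd b c = 1`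
(i-congruent numbers `≤ x` coming from the degenerate case `d = 0`, counted with
multiplicity). -/
noncomputable def gCount (x : ℝ) : ℕ :=
  Set.ncard {p : ℕ × ℕ | 0 < p.2 ∧ p.2 < p.1 ∧ ((p.1 * p.2 : ℕ) : ℝ) ≤ 2 * x ∧
    ∃ c : ℕ, p.1 ^ 2 + p.2 ^ 2 = c ^ 2 ∧ Nat.gcd p.2 c = 1}

/-- The set counted by `gCount`. -/
def gSet (x : ℝ) : Set (ℕ × ℕ) :=
  {p : ℕ × ℕ | 0 < p.2 ∧ p.2 < p.1 ∧ ((p.1 * p.2 : ℕ) : ℝ) ≤ 2 * x ∧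
    ∃ c : ℕ, p.1 ^ 2 + p.2 ^ 2 = c ^ 2 ∧ Nat.gcd p.2 c = 1}

/-- Sorted legs of the triangle with parameters `m = n + s`, `n`. -/
def legs (q : ℕ × ℕ) : ℕ × ℕ :=
  (max (q.2 * (2 * q.1 + q.2)) (2 * q.1 * (q.1 + q.2)),
   min (q.2 * (2 * q.1 + q.2)) (2 * q.1 * (q.1 + q.2)))

/-- Pairs of positive integers with product at most `y`. -/
noncomputable def hyp (y : ℝ) : Finset (ℕ × ℕ) :=
  (Finset.Ioc 0 ⌊y⌋₊).biUnion fun n => (Finset.Ioc 0 ⌊y / n⌋₊).image fun s => (n, s)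

lemma mem_hyp {y : ℝ} {n s : ℕ} (hn : 0 < n) (hs : 0 < s) (h : (n : ℝ) * s ≤ y) :
    (n, s) ∈ hyp y := by
  have hn' : (1 : ℝ) ≤ n := by exact_mod_cast hn
  have hs' : (1 : ℝ) ≤ s := by exact_mod_cast hs
  simp only [hyp, Finset.mem_biUnion, Finset.mem_image, Finset.mem_Ioc]
  refine ⟨n, ⟨hn, Nat.le_floor (by nlinarith)⟩, s, ⟨hs, Nat.le_floor ?_⟩, rfl⟩
  rw [le_div_iff₀ (by linarith)]
  linarith

lemma card_hyp {y : ℝ} (hy : 1 ≤ y) : ((hyp y).card : ℝ) ≤ y * (1 + Real.log y) := by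
  have h1 : (hyp y).card ≤ ∑ n ∈ Finset.Ioc 0 ⌊y⌋₊, ⌊y / n⌋₊ := by
    refine Finset.card_biUnion_le.trans (Finset.sum_le_sum fun n _ => ?_)
    refine Finset.card_image_le.trans ?_
    simp
  have h2 : ((∑ n ∈ Finset.Ioc 0 ⌊y⌋₊, ⌊y / n⌋₊ : ℕ) : ℝ) ≤ y * (harmonic ⌊y⌋₊ : ℝ) := by
    rw [harmonic_eq_sum_Icc]
    push_cast
    rw [Finset.mul_sum]
    have : Finset.Ioc 0 ⌊y⌋₊ = Finset.Icc 1 ⌊y⌋₊ := by ext; simp [Nat.succ_le_iff]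
    rw [this]
    refine Finset.sum_le_sum fun n _ => ?_
    rw [← div_eq_mul_inv]
    exact Nat.floor_le (by positivity)
  calc ((hyp y).card : ℝ) ≤ _ := by exact_mod_cast h1
    _ ≤ _ := h2
    _ ≤ _ := by
      gcongr
      exact harmonic_floor_le_one_add_log y hy

lemma param_exists {u v c : ℕ} (hu : 0 < u) (hv : 0 < v) (h : u ^ 2 + v ^ 2 = c ^ 2)
    (hg : Nat.gcd u v = 1) (hodd : u % 2 = 1) :
    ∃ n s : ℕ, 0 < n ∧ 0 < s ∧ u = s * (2 * n + s) ∧ v = 2 * n * (n + s) := by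
  have hc : 0 < c := by
    rcases Nat.eq_zero_or_pos c with rfl | h'
    · have : 0 < u ^ 2 := by positivity
      simp at h; omega
    · exact h'
  have hp : PythagoreanTriple (u : ℤ) v c := by
    unfold PythagoreanTriple
    have : ((u ^ 2 + v ^ 2 : ℕ) : ℤ) = ((c ^ 2 : ℕ) : ℤ) := by rw [h]
    push_cast at this
    linarith [this, sq (u : ℤ), sq (v : ℤ), sq (c : ℤ)]
  obtain ⟨m, n, hx, hy, -, -, -, hm⟩ := hp.coprime_classification' (by simpa using hg)
    (by omega) (by exact_mod_cast hc)
  have hv' : (0 : ℤ) < v := by exact_mod_cast hv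
  have hu' : (0 : ℤ) < u := by exact_mod_cast hu
  have hm0 : 0 < m := by
    rcases hm.eq_or_lt with h0 | h0
    · subst h0; simp at hy; omega
    · exact h0
  have hn0 : 0 < n := by
    by_contra hcon
    push Not at hcon
    nlinarith
  have hlt : n < m := by
    by_contra hcon
    push Not at hcon
    nlinarith
  refine ⟨n.toNat, (m - n).toNat, by omega, by omega, ?_, ?_⟩
  · zify
    rw [Int.toNat_of_nonneg hn0.le, Int.toNat_of_nonneg (by omega), hx]; ring
  · zify
    rw [Int.toNat_of_nonneg hn0.le, Int.toNat_of_nonneg (by omega), hy]; ring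

lemma gSet_subset (x : ℝ) (hx : 0 ≤ x) : gSet x ⊆ legs '' (hyp (Real.sqrt x) : Set (ℕ × ℕ)) := by
  rintro ⟨a, b⟩ ⟨hb, hba, hab, c, hc, hg⟩
  simp only at hb hba hab hc hg
  have ha : 0 < a := by omega
  have hcop : Nat.Coprime b a := by
    rw [Nat.coprime_iff_gcd_eq_one] 
    by_contra hne
    obtain ⟨p, hp, hpd⟩ := Nat.exists_prime_and_dvd hne
    have h1 := hpd.trans (Nat.gcd_dvd_left b a)
    have h2 := hpd.trans (Nat.gcd_dvd_right b a)
    have h3 : p ∣ c ^ 2 := by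
      rw [← hc]; exact dvd_add (dvd_pow h2 two_ne_zero) (dvd_pow h1 two_ne_zero)
    have h4 := hp.dvd_of_dvd_pow h3
    have h5 := Nat.dvd_gcd h1 h4
    rw [hg] at h5
    exact hp.one_lt.ne' (Nat.dvd_one.1 h5)
  have key : ∃ n s : ℕ, 0 < n ∧ 0 < s ∧ legs (n, s) = (a, b) ∧
      a * b = (s * (2 * n + s)) * (2 * n * (n + s)) := by
    rcases Nat.mod_two_eq_zero_or_one a with h0 | h1
    · have hb1 : b % 2 = 1 := by
        by_contra hcon
        have : 2 ∣ Nat.gcd b a := Nat.dvd_gcd (by omega) (by omega)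
        rw [hcop] at this; omega
      obtain ⟨n, s, hn, hs, e1, e2⟩ := param_exists hb ha (by linarith) hcop hb1
      refine ⟨n, s, hn, hs, ?_, by rw [← e1, ← e2]; ring⟩
      simp only [legs]
      rw [← e1, ← e2, max_eq_right hba.le, min_eq_left hba.le]
    · obtain ⟨n, s, hn, hs, e1, e2⟩ := param_exists ha hb hc hcop.symm h1
      refine ⟨n, s, hn, hs, ?_, by rw [← e1, ← e2]⟩
      simp only [legs]
      rw [← e1, ← e2, max_eq_left hba.le, min_eq_right hba.le]
  obtain ⟨n, s, hn, hs, e, hprod⟩ := key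
  refine ⟨(n, s), ?_, e⟩
  rw [Finset.mem_coe]
  refine mem_hyp hn hs (Real.le_sqrt_of_sq_le ?_)
  have h1 : ((n * s) ^ 2 * 2 : ℕ) ≤ a * b := by
    rw [hprod]
    nlinarith [Nat.zero_le (n * s * (n * n)), Nat.zero_le (n * s * (s * s)), Nat.zero_le (n * s * (n * s))]
  have h2 : (((n * s) ^ 2 * 2 : ℕ) : ℝ) ≤ ((a * b : ℕ) : ℝ) := by exact_mod_cast h1
  push_cast at h2 hab ⊢
  linarith

lemma gSet_finite (x : ℝ) (hx : 0 ≤ x) : (gSet x).Finite :=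
  ((hyp (Real.sqrt x)).finite_toSet.image legs).subset (gSet_subset x hx)

lemma gCount_upper {x : ℝ} (hx : 1 ≤ x) : (gCount x : ℝ) ≤ 10 * x ^ ((5 : ℝ) / 9) := by
  have hx0 : 0 ≤ x := by linarith
  have h1 : gCount x ≤ (hyp (Real.sqrt x)).card := by
    calc gCount x = (gSet x).ncard := rfl
      _ ≤ (legs '' (hyp (Real.sqrt x) : Set (ℕ × ℕ))).ncard :=
        Set.ncard_le_ncard (gSet_subset x hx0) ((hyp (Real.sqrt x)).finite_toSet.image legs)
      _ ≤ (hyp (Real.sqrt x) : Set (ℕ × ℕ)).ncard :=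
        Set.ncard_image_le (hyp (Real.sqrt x)).finite_toSet
      _ = _ := Set.ncard_coe_finset _
  have hy : 1 ≤ Real.sqrt x := Real.one_le_sqrt.2 hx
  have hy0 : 0 < Real.sqrt x := by linarith
  have h2 := card_hyp hy
  have h3 : Real.log (Real.sqrt x) ≤ Real.sqrt x ^ ((1 : ℝ) / 9) / (1 / 9) :=
    Real.log_le_rpow_div hy0.le (by norm_num)
  have h4 : 1 ≤ Real.sqrt x ^ ((1 : ℝ) / 9) := Real.one_le_rpow hy (by norm_num)
  have h5 : x ^ ((5 : ℝ) / 9) = Real.sqrt x * Real.sqrt x ^ ((1 : ℝ) / 9) := by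
    rw [Real.sqrt_eq_rpow, ← Real.rpow_mul hx0, ← Real.rpow_add (by linarith)]
    norm_num
  rw [h5]
  calc (gCount x : ℝ) ≤ (hyp (Real.sqrt x)).card := by exact_mod_cast h1
    _ ≤ _ := h2
    _ ≤ Real.sqrt x * (10 * Real.sqrt x ^ ((1 : ℝ) / 9)) := by
      gcongr
      linarith
    _ = _ := by ring

open Filter Topology in
lemma tendsto_half_floor {c : ℝ} (hc : 0 ≤ c) :
    Tendsto (fun N : ℝ => (((⌊c * N⌋₊ + 1) / 2 : ℕ) : ℝ) / N) atTop (𝓝 (c / 2)) := by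
  have h1 : Tendsto (fun N : ℝ => ((⌊c * N⌋₊ : ℝ) / N) / 2) atTop (𝓝 (c / 2)) :=
    (tendsto_nat_floor_mul_div_atTop hc).div_const 2
  have h2 : Tendsto (fun N : ℝ => ((⌊c * N⌋₊ : ℝ) / N) / 2 + N⁻¹) atTop (𝓝 (c / 2 + 0)) :=
    h1.add tendsto_inv_atTop_zero
  rw [add_zero] at h2
  refine tendsto_of_tendsto_of_tendsto_of_le_of_le' h1 h2 ?_ ?_
  · filter_upwards [eventually_gt_atTop 0] with N hN
    rw [div_right_comm]
    gcongr
    have : ⌊c * N⌋₊ ≤ 2 * ((⌊c * N⌋₊ + 1) / 2) := by omega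
    have : ((⌊c * N⌋₊ : ℕ) : ℝ) ≤ 2 * (((⌊c * N⌋₊ + 1) / 2 : ℕ) : ℝ) := by exact_mod_cast this
    linarith
  · filter_upwards [eventually_gt_atTop 0] with N hN
    rw [div_right_comm, inv_eq_one_div, ← add_div]
    gcongr
    have : 2 * ((⌊c * N⌋₊ + 1) / 2) ≤ ⌊c * N⌋₊ + 1 := by omega
    have : 2 * (((⌊c * N⌋₊ + 1) / 2 : ℕ) : ℝ) ≤ ((⌊c * N⌋₊ : ℕ) : ℝ) + 1 := by exact_mod_cast this
    linarith

lemma card_odd_Ioc (M : ℕ) : ((Finset.Ioc 0 M).filter Odd).card = (M + 1) / 2 := by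
  induction M with
  | zero => simp
  | succ k ih =>
    rw [← Finset.insert_Ioc_right_eq_Ioc_add_one (by omega : 0 ≤ k), Finset.filter_insert]
    split_ifs with h
    · rw [Finset.card_insert_of_notMem (by simp), ih]
      obtain ⟨r, hr⟩ := h
      omega
    · rw [ih]
      rw [Nat.not_odd_iff_even] at h
      obtain ⟨r, hr⟩ := h
      omega

/-- Lattice points `(n, s)` in a scaled box with `s` odd. -/
noncomputable def boxOdd (α β c N : ℝ) : Finset (ℕ × ℕ) :=
  (Finset.Ioc ⌊α * N⌋₊ ⌊β * N⌋₊) ×ˢ ((Finset.Ioc 0 ⌊c * N⌋₊).filter Odd)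

/-- The coprime ones. -/
noncomputable def boxGood (α β c N : ℝ) : Finset (ℕ × ℕ) :=
  (boxOdd α β c N).filter fun q => Nat.Coprime q.1 q.2

lemma mem_boxOdd {α β c N : ℝ} (hα : 0 ≤ α) (hβ : 0 ≤ β) (hc : 0 ≤ c) (hN : 0 ≤ N) (n s : ℕ) :
    (n, s) ∈ boxOdd α β c N ↔ (α * N < n ∧ (n : ℝ) ≤ β * N) ∧ ((s : ℝ) ≤ c * N ∧ Odd s) := by
  simp only [boxOdd, Finset.mem_product, Finset.mem_filter, Finset.mem_Ioc]
  rw [Nat.floor_lt (by positivity), Nat.le_floor_iff (by positivity),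
    Nat.le_floor_iff (by positivity)]
  constructor
  · rintro ⟨h1, ⟨_, h2⟩, h3⟩
    exact ⟨h1, h2, h3⟩
  · rintro ⟨h1, h2, h3⟩
    exact ⟨h1, ⟨h3.pos, h2⟩, h3⟩

lemma card_boxOdd (α β c N : ℝ) :
    (boxOdd α β c N).card = (⌊β * N⌋₊ - ⌊α * N⌋₊) * ((⌊c * N⌋₊ + 1) / 2) := by
  rw [boxOdd, Finset.card_product, card_odd_Ioc, Nat.card_Ioc]

lemma card_boxOdd_le {α β c N : ℝ} (hβ : 0 ≤ β) (hc : 0 ≤ c) (hN : 0 ≤ N) :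
    ((boxOdd α β c N).card : ℝ) ≤ β * c * N ^ 2 := by
  rw [card_boxOdd]
  have h1 : ((⌊β * N⌋₊ - ⌊α * N⌋₊ : ℕ) : ℝ) ≤ β * N :=
    le_trans (by exact_mod_cast Nat.sub_le _ _) (Nat.floor_le (by positivity))
  have h2 : (((⌊c * N⌋₊ + 1) / 2 : ℕ) : ℝ) ≤ c * N :=
    le_trans (by exact_mod_cast (by omega)) (Nat.floor_le (by positivity))
  push_cast [Nat.cast_mul] at *
  calc _ ≤ (β * N) * (c * N) := by
        exact mul_le_mul h1 h2 (by positivity) (by positivity)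
    _ = _ := by ring

open Filter Topology in
lemma tendsto_boxOdd {α β c : ℝ} (hα : 0 ≤ α) (hαβ : α ≤ β) (hc : 0 ≤ c) :
    Tendsto (fun N : ℝ => ((boxOdd α β c N).card : ℝ) / N ^ 2) atTop (𝓝 ((β - α) * (c / 2))) := by
  have h := ((tendsto_nat_floor_mul_div_atTop (hα.trans hαβ)).sub
    (tendsto_nat_floor_mul_div_atTop hα)).mul (tendsto_half_floor hc)
  refine h.congr' ?_
  filter_upwards [eventually_gt_atTop 0] with N hN
  rw [card_boxOdd, Nat.cast_mul, Nat.cast_sub (Nat.floor_le_floor (by gcongr))]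
  field_simp

/-- Indicator of odd primes divided by the square. -/
noncomputable def oddP (p : ℕ) : ℝ := if p.Prime ∧ p ≠ 2 then 1 / (p : ℝ) ^ 2 else 0

lemma oddP_nonneg (p : ℕ) : 0 ≤ oddP p := by
  unfold oddP; split_ifs <;> positivity

lemma oddP_sum_le (k : ℕ) :
    ∑ p ∈ Finset.range (2 * (50 + k) + 1), oddP p ≤ 20543 / 100000 - 1 / (4 * (50 + k : ℝ)) := by
  induction k with
  | zero =>
    simp only [oddP, Finset.sum_range_succ, Finset.sum_range_zero]
    norm_num
  | succ k ih =>
    have e : 2 * (50 + (k + 1)) + 1 = (2 * (50 + k) + 1) + 1 + 1 := by ring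
    rw [e, Finset.sum_range_succ, Finset.sum_range_succ]
    have h2 : oddP (2 * (50 + k) + 1 + 1) = 0 := by
      unfold oddP
      rw [if_neg]
      rintro ⟨hp, hne⟩
      rcases hp.eq_one_or_self_of_dvd 2 ⟨50 + k + 1, by ring⟩ with h | h <;> omega
    have h1 : oddP (2 * (50 + k) + 1) ≤ 1 / (2 * (50 + k : ℝ) + 1) ^ 2 := by
      unfold oddP
      split_ifs
      · push_cast; exact le_rfl
      · positivity
    have h3 : 1 / (2 * (50 + k : ℝ) + 1) ^ 2 ≤
        1 / (4 * (50 + k : ℝ)) - 1 / (4 * (50 + (k + 1) : ℝ)) := by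
      rw [div_sub_div _ _ (by positivity) (by positivity),
        div_le_div_iff₀ (by positivity) (by positivity)]
      nlinarith
    rw [h2]
    push_cast
    linarith

lemma oddP_range_le (k : ℕ) : ∑ p ∈ Finset.range k, oddP p ≤ 20543 / 100000 := by
  have h1 : ∑ p ∈ Finset.range k, oddP p ≤ ∑ p ∈ Finset.range (2 * (50 + k) + 1), oddP p :=
    Finset.sum_le_sum_of_subset_of_nonneg
      (by intro i; simp only [Finset.mem_range]; omega) (fun i _ _ => oddP_nonneg i)
  have h2 := oddP_sum_le k
  have h3 : 0 ≤ 1 / (4 * (50 + k : ℝ)) := by positivity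
  linarith

lemma oddP_summable : Summable oddP := summable_of_sum_range_le oddP_nonneg oddP_range_le

lemma oddP_tsum_le : ∑' p, oddP p ≤ 20543 / 100000 :=
  Real.tsum_le_of_sum_range_le oddP_nonneg oddP_range_le

/-- Contribution of an odd prime `p`. -/
noncomputable def contrib (α β c N : ℝ) (p : ℕ) : ℝ :=
  if p.Prime ∧ p ≠ 2 then ((boxOdd α β c (N / p)).card : ℝ) else 0

lemma contrib_nonneg (α β c N : ℝ) (p : ℕ) : 0 ≤ contrib α β c N p := by
  unfold contrib; split_ifs <;> positivity

lemma contrib_le {α β c N : ℝ} (hβ : 0 ≤ β) (hc : 0 ≤ c) (hN : 0 ≤ N) (p : ℕ) :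
    contrib α β c N p ≤ β * c * N ^ 2 * oddP p := by
  unfold contrib oddP
  split_ifs with h
  · refine (card_boxOdd_le hβ hc (by positivity)).trans (le_of_eq ?_)
    rw [div_pow]; ring
  · simp

lemma sieve {α β c N : ℝ} (hα : 0 ≤ α) (hβ : 0 ≤ β) (hc : 0 ≤ c) (hN : 0 ≤ N) :
    ((boxOdd α β c N).card : ℝ) ≤ (boxGood α β c N).card + ∑' p, contrib α β c N p := by
  classical
  set P := (Finset.range (⌊c * N⌋₊ + 1)).filter (fun p => p.Prime ∧ p ≠ 2) with hP
  have hsub : boxOdd α β c N ⊆ boxGood α β c N ∪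
      P.biUnion fun p => (boxOdd α β c (N / p)).image fun q => (p * q.1, p * q.2) := by
    rintro ⟨n, s⟩ h
    by_cases hg : Nat.Coprime n s
    · exact Finset.mem_union_left _ (Finset.mem_filter.2 ⟨h, hg⟩)
    · apply Finset.mem_union_right
      obtain ⟨p, hp, hpd⟩ := Nat.exists_prime_and_dvd hg
      obtain ⟨n', rfl⟩ := hpd.trans (Nat.gcd_dvd_left n s)
      obtain ⟨s', rfl⟩ := hpd.trans (Nat.gcd_dvd_right _ s)
      obtain ⟨⟨h1, h2⟩, h3, h4⟩ := (mem_boxOdd hα hβ hc hN _ _).1 h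
      have ho := Nat.odd_mul.1 h4
      have hp0 : (0 : ℝ) < p := by exact_mod_cast hp.pos
      rw [Finset.mem_biUnion]
      refine ⟨p, ?_, ?_⟩
      · rw [hP, Finset.mem_filter, Finset.mem_range, Nat.lt_succ_iff]
        refine ⟨Nat.le_floor (le_trans ?_ h3), hp, ?_⟩
        · exact_mod_cast Nat.le_mul_of_pos_right p ho.2.pos
        · rintro rfl
          exact absurd ho.1 (by decide)
      · rw [Finset.mem_image]
        refine ⟨(n', s'), (mem_boxOdd hα hβ hc (by positivity) _ _).2 ?_, rfl⟩
        push_cast at h1 h2 h3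
        refine ⟨⟨?_, ?_⟩, ?_, ho.2⟩
        · rw [← mul_div_assoc, div_lt_iff₀ hp0]; linarith
        · rw [← mul_div_assoc, le_div_iff₀ hp0]; linarith
        · rw [← mul_div_assoc, le_div_iff₀ hp0]; linarith
  have h1 : (boxOdd α β c N).card ≤ (boxGood α β c N).card +
      ∑ p ∈ P, (boxOdd α β c (N / p)).card := by
    refine (Finset.card_le_card hsub).trans ((Finset.card_union_le _ _).trans ?_)
    gcongr
    refine Finset.card_biUnion_le.trans (Finset.sum_le_sum fun p _ => Finset.card_image_le)
  have h2 : ((∑ p ∈ P, (boxOdd α β c (N / p)).card : ℕ) : ℝ) ≤ ∑' p, contrib α β c N p := by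
    have hs : Summable (contrib α β c N) :=
      Summable.of_nonneg_of_le (contrib_nonneg α β c N) (contrib_le hβ hc hN)
        (oddP_summable.mul_left _)
    refine le_trans (le_of_eq ?_) (hs.sum_le_tsum P fun i _ => contrib_nonneg α β c N i)
    push_cast
    refine Finset.sum_congr rfl fun p hp => ?_
    rw [contrib, if_pos (Finset.mem_filter.1 hp).2]
  have h3 : ((boxOdd α β c N).card : ℝ) ≤ (boxGood α β c N).card +
      ((∑ p ∈ P, (boxOdd α β c (N / p)).card : ℕ) : ℝ) := by exact_mod_cast h1
  linarith

open Filter Topology in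
lemma tendsto_contrib {α β c : ℝ} (hα : 0 ≤ α) (hαβ : α ≤ β) (hc : 0 ≤ c) :
    Tendsto (fun N : ℝ => ∑' p, contrib α β c N p / N ^ 2) atTop
      (𝓝 (∑' p, (β - α) * (c / 2) * oddP p)) := by
  have hβ := hα.trans hαβ
  refine tendsto_tsum_of_dominated_convergence (bound := fun p => β * c * oddP p)
    (oddP_summable.mul_left _) ?_ ?_
  · intro p
    unfold contrib oddP
    split_ifs with h
    · have hp0 : (0 : ℝ) < p := by exact_mod_cast h.1.pos
      have h1 := (tendsto_boxOdd hα hαβ hc).comp (tendsto_id.atTop_div_const hp0)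
      have h2 := h1.mul_const (1 / (p : ℝ) ^ 2)
      refine h2.congr fun N => ?_
      simp only [Function.comp, id]
      rw [div_pow]
      field_simp
    · simp
  · filter_upwards [eventually_gt_atTop 0] with N hN p
    rw [Real.norm_of_nonneg (div_nonneg (contrib_nonneg _ _ _ _ _) (by positivity)),
      div_le_iff₀ (by positivity)]
    refine (contrib_le hβ hc hN.le p).trans (le_of_eq (by ring))

open Filter Topology in
lemma boxGood_lower {α β c ε : ℝ} (hα : 0 ≤ α) (hαβ : α ≤ β) (hc : 0 ≤ c) (hε : 0 < ε) :
    ∀ᶠ N : ℝ in atTop,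
      ((β - α) * c * (79457 / 200000) - ε) * N ^ 2 ≤ (boxGood α β c N).card := by
  have h := (tendsto_boxOdd hα hαβ hc).sub (tendsto_contrib hα hαβ hc)
  have hlt : (β - α) * c * (79457 / 200000) - ε <
      (β - α) * (c / 2) - ∑' p, (β - α) * (c / 2) * oddP p := by
    rw [tsum_mul_left]
    have h1 : 0 ≤ (β - α) * (c / 2) := mul_nonneg (by linarith) (by linarith)
    have h2 := mul_le_mul_of_nonneg_left oddP_tsum_le h1
    nlinarith
  filter_upwards [h.eventually_const_lt hlt, eventually_gt_atTop 0] with N h1 hN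
  have h2 := sieve hα (hα.trans hαβ) hc hN.le
  rw [tsum_div_const, ← sub_div, lt_div_iff₀ (by positivity)] at h1
  linarith

/-- Cut points of the staircase, in units of `1 / 1000`. -/
def cutList : List ℕ := [
  0, 1, 2, 3, 4, 5, 6, 8, 10, 12, 14, 16, 19, 22, 25, 29, 33, 37, 41, 46, 51, 56, 62, 68, 74,
  81, 88, 95, 104, 112, 121, 130, 140, 149, 160, 170, 181, 192, 203, 213, 226, 240, 254, 266,
  278, 291, 304, 318, 332, 348, 364, 380, 398, 416, 435, 455, 475, 490, 512, 535, 552, 568,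
  585, 603, 621, 640, 659, 679, 700, 721, 743, 765, 788, 812, 837, 862, 888, 915, 943, 971,
  1001, 1031, 1062, 1094, 1127, 1161, 1196, 1232, 1270, 1308, 1348, 1388, 1430, 1474, 1518,
  1564, 1611, 1660, 1710, 1762, 1842, 1898, 1985, 2045, 2138, 2236, 2338, 2481, 2595, 2713,
  2837, 3011, 3196, 3443, 3654, 3937, 4304, 4637, 4995, 5462, 5973]

/-- Heights of the staircase, in units of `1 / 1000`. -/
def topList : List ℕ := [
  9999, 7935, 6930, 6295, 5843, 5497, 4992, 4631, 4355, 4135, 3952, 3728, 3546, 3395, 3225,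
  3084, 2964, 2859, 2745, 2645, 2558, 2465, 2382, 2308, 2231, 2161, 2097, 2024, 1964, 1903,
  1846, 1789, 1741, 1686, 1640, 1593, 1548, 1506, 1470, 1426, 1381, 1338, 1304, 1271, 1236,
  1203, 1170, 1137, 1102, 1068, 1035, 1000, 966, 932, 898, 865, 841, 807, 774, 750, 728, 705,
  682, 660, 637, 615, 593, 570, 548, 526, 505, 484, 462, 441, 421, 401, 381, 361, 343, 324,
  306, 288, 272, 255, 239, 224, 210, 196, 183, 170, 158, 147, 136, 126, 117, 108, 100, 92, 85,
  75, 69, 61, 56, 49, 43, 38, 32, 28, 24, 21, 18, 15, 12, 10, 8, 6, 5, 4, 3, 2]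

/-- The `i`-th cut point. -/
def cut (i : ℕ) : ℕ := cutList.getD i 0

/-- The `i`-th height. -/
def top (i : ℕ) : ℕ := topList.getD i 0

lemma stair_mono : ∀ i < 120, ∀ j < 120, i ≤ j → cut i ≤ cut j ∧ cut i ≤ cut (i + 1) ∧
    (i < j → cut (i + 1) ≤ cut j) := by
  decide +kernel

lemma stair_below : ∀ i < 120,
    cut (i + 1) * top i * (cut (i + 1) + top i) * (2 * cut (i + 1) + top i) ≤ 1000 ^ 4 := by
  decide +kernel

lemma stair_area :
    1266000 ≤ ∑ i ∈ Finset.range 120, (cut (i + 1) - cut i) * top i := by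
  decide +kernel

lemma legs_inj {n s n' s' : ℕ} (hs : Odd s) (hs' : Odd s')
    (h : legs (n, s) = legs (n', s')) : (n, s) = (n', s') := by
  have o1 : Odd (s * (2 * n + s)) := hs.mul (Even.add_odd ⟨n, by ring⟩ hs)
  have o2 : Odd (s' * (2 * n' + s')) := hs'.mul (Even.add_odd ⟨n', by ring⟩ hs')
  have e1 : Even (2 * n * (n + s)) := ⟨n * (n + s), by ring⟩
  have e2 : Even (2 * n' * (n' + s')) := ⟨n' * (n' + s'), by ring⟩
  simp only [legs, Prod.mk.injEq] at h
  have key : s * (2 * n + s) = s' * (2 * n' + s') ∧ 2 * n * (n + s) = 2 * n' * (n' + s') := by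
    generalize s * (2 * n + s) = X at *
    generalize s' * (2 * n' + s') = X' at *
    generalize 2 * n * (n + s) = Y at *
    generalize 2 * n' * (n' + s') = Y' at *
    obtain ⟨a, ha⟩ := o1
    obtain ⟨b, hb⟩ := o2
    obtain ⟨c, hc⟩ := e1
    obtain ⟨d, hd⟩ := e2
    omega
  obtain ⟨hX, hY⟩ := key
  have aux : ∀ n s n' s' : ℕ, s * (2 * n + s) = s' * (2 * n' + s') →
      2 * n * (n + s) = 2 * n' * (n' + s') → ¬ n < n' := by
    intro n s n' s' hX hY hlt
    have hm : n' + s' ≤ n + s := by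
      by_contra hcon
      push Not at hcon
      nlinarith
    have e : (n + s) ^ 2 + n' ^ 2 = (n' + s') ^ 2 + n ^ 2 := by nlinarith
    nlinarith
  have hn : n = n' := by
    rcases lt_trichotomy n n' with h | h | h
    · exact absurd h (aux n s n' s' hX hY)
    · exact h
    · exact absurd h (aux n' s' n s hX.symm hY.symm)
  subst hn
  have : s = s' := by
    rcases lt_trichotomy s s' with h | h | h
    · nlinarith
    · exact h
    · nlinarith
  rw [this]

lemma coprime_legs {n s : ℕ} (hs : Odd s) (h : Nat.Coprime n s) :
    Nat.Coprime (s * (2 * n + s)) (2 * n * (n + s)) := by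
  have h2s : Nat.Coprime s 2 := hs.coprime_two_right
  have hs1 : Nat.Coprime s (n + s) := by simpa using h.symm
  have ho : Odd (2 * n + s) := Even.add_odd ⟨n, by ring⟩ hs
  have h3 : Nat.Coprime (2 * n + s) n := by
    rw [show 2 * n + s = s + 2 * n by ring]
    simpa using h.symm
  have h4 : Nat.Coprime (2 * n + s) (n + s) := by
    rw [show 2 * n + s = n + (n + s) by ring]
    simpa using h
  exact Nat.Coprime.mul_left ((h2s.mul_right h.symm).mul_right hs1)
    ((ho.coprime_two_right.mul_right h3).mul_right h4)

lemma legs_mem {x : ℝ} {n s : ℕ} (hn : 0 < n) (hs : Odd s) (h : Nat.Coprime n s)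
    (hx : (n : ℝ) * s * (n + s) * (2 * n + s) ≤ x) : legs (n, s) ∈ gSet x := by
  have o1 : Odd (s * (2 * n + s)) := hs.mul (Even.add_odd ⟨n, by ring⟩ hs)
  have e1 : Even (2 * n * (n + s)) := ⟨n * (n + s), by ring⟩
  have hc := coprime_legs hs h
  have hpy : (s * (2 * n + s)) ^ 2 + (2 * n * (n + s)) ^ 2 = ((n + s) ^ 2 + n ^ 2) ^ 2 := by ring
  have hX : 0 < s * (2 * n + s) := o1.pos
  have hY : 0 < 2 * n * (n + s) := by positivity
  have hp : (((s * (2 * n + s)) * (2 * n * (n + s)) : ℕ) : ℝ) ≤ 2 * x := by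
    push_cast; nlinarith
  have hne : s * (2 * n + s) ≠ 2 * n * (n + s) := by
    intro he; rw [he] at o1; exact (Nat.not_odd_iff_even.2 e1) o1
  simp only [legs, gSet, Set.mem_ofPred_eq]
  generalize (n + s) ^ 2 + n ^ 2 = C at *
  generalize s * (2 * n + s) = X at *
  generalize 2 * n * (n + s) = Y at *
  have aux : ∀ u v : ℕ, u.Coprime v → u ^ 2 + v ^ 2 = C ^ 2 → Nat.gcd v C = 1 := by
    intro u v huv he
    by_contra hcon
    obtain ⟨p, hp, hpd⟩ := Nat.exists_prime_and_dvd hcon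
    have h1 := hpd.trans (Nat.gcd_dvd_left _ _)
    have h2 := hpd.trans (Nat.gcd_dvd_right _ _)
    have h3 : p ∣ u ^ 2 := by
      rw [← Nat.dvd_add_left (dvd_pow h1 two_ne_zero), he]
      exact dvd_pow h2 two_ne_zero
    have h4 := hp.dvd_of_dvd_pow h3
    have h5 := Nat.dvd_gcd h4 h1
    rw [huv] at h5
    exact hp.one_lt.ne' (Nat.dvd_one.1 h5)
  rcases lt_or_gt_of_ne hne with hlt | hlt
  · rw [max_eq_right hlt.le, min_eq_left hlt.le]
    exact ⟨hX, hlt, by rw [mul_comm]; exact hp, C, by linarith, aux Y X hc.symm (by linarith)⟩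
  · rw [max_eq_left hlt.le, min_eq_right hlt.le]
    exact ⟨hY, hlt, hp, C, hpy, aux X Y hc hpy⟩

/-- The `i`-th scaled box of the staircase. -/
noncomputable def stairBox (N : ℝ) (i : ℕ) : Finset (ℕ × ℕ) :=
  boxGood (cut i / 1000) (cut (i + 1) / 1000) (top i / 1000) N

lemma mem_stairBox {N : ℝ} (hN : 0 ≤ N) {i n s : ℕ} (h : (n, s) ∈ stairBox N i) :
    ((cut i / 1000 : ℝ) * N < n ∧ (n : ℝ) ≤ (cut (i + 1) / 1000 : ℝ) * N) ∧
      ((s : ℝ) ≤ (top i / 1000 : ℝ) * N ∧ Odd s) ∧ Nat.Coprime n s := by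
  obtain ⟨h1, h2⟩ := Finset.mem_filter.1 h
  obtain ⟨h3, h4⟩ := (mem_boxOdd (by positivity) (by positivity) (by positivity) hN _ _).1 h1
  exact ⟨h3, h4, h2⟩

lemma stair_card_le {N : ℝ} (hN : 0 ≤ N) :
    ∑ i ∈ Finset.range 120, (stairBox N i).card ≤ gCount (N ^ 4) := by
  classical
  rw [← Finset.card_biUnion]
  · have hsub : (((Finset.range 120).biUnion (stairBox N)).image legs : Set (ℕ × ℕ)) ⊆
        gSet (N ^ 4) := by
      intro q hq
      rw [Finset.mem_coe, Finset.mem_image] at hq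
      obtain ⟨⟨n, s⟩, hq, rfl⟩ := hq
      obtain ⟨i, hi, hm⟩ := Finset.mem_biUnion.1 hq
      obtain ⟨⟨h1, h2⟩, ⟨h3, h4⟩, h5⟩ := mem_stairBox hN hm
      have hn : (0 : ℝ) < n := lt_of_le_of_lt (by positivity) h1
      refine legs_mem (by exact_mod_cast hn) h4 h5 ?_
      have hb := stair_below i (Finset.mem_range.1 hi)
      have hb' : ((cut (i + 1) * top i * (cut (i + 1) + top i) * (2 * cut (i + 1) + top i) : ℕ) : ℝ)
          ≤ ((1000 ^ 4 : ℕ) : ℝ) := by exact_mod_cast hb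
      push_cast at hb'
      set B : ℝ := ((cut (i + 1) : ℕ) : ℝ) with hB
      set T : ℝ := ((top i : ℕ) : ℝ) with hT
      have hB0 : 0 ≤ B := by positivity
      have hT0 : 0 ≤ T := by positivity
      calc (n : ℝ) * s * (n + s) * (2 * n + s)
          ≤ (B / 1000 * N) * (T / 1000 * N) * (B / 1000 * N + T / 1000 * N) *
            (2 * (B / 1000 * N) + T / 1000 * N) := by gcongr
        _ = (B * T * (B + T) * (2 * B + T)) / 1000 ^ 4 * N ^ 4 := by ring
        _ ≤ 1 * N ^ 4 := by
          gcongr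
          rw [div_le_one (by positivity)]
          exact hb'.trans (by norm_num)
        _ = _ := one_mul _
    calc _ = (((Finset.range 120).biUnion (stairBox N)).image legs).card := by
          rw [Finset.card_image_of_injOn]
          rintro ⟨n, s⟩ hq ⟨n', s'⟩ hq' he
          rw [Finset.mem_coe] at hq hq'
          obtain ⟨i, hi, hm⟩ := Finset.mem_biUnion.1 hq
          obtain ⟨i', hi', hm'⟩ := Finset.mem_biUnion.1 hq'
          exact legs_inj (mem_stairBox hN hm).2.1.2 (mem_stairBox hN hm').2.1.2 he
      _ = (((Finset.range 120).biUnion (stairBox N)).image legs : Set (ℕ × ℕ)).ncard :=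
          (Set.ncard_coe_finset _).symm
      _ ≤ (gSet (N ^ 4)).ncard := Set.ncard_le_ncard hsub (gSet_finite _ (by positivity))
      _ = _ := rfl
  · have aux : ∀ i ∈ Finset.range 120, ∀ j ∈ Finset.range 120, i < j →
        Disjoint (stairBox N i) (stairBox N j) := by
      intro i hi j hj hij
      rw [Finset.disjoint_left]
      rintro ⟨n, s⟩ h h'
      have h1 := (mem_stairBox hN h).1.2
      have h2 := (mem_stairBox hN h').1.1
      have h3 := (stair_mono i (Finset.mem_range.1 hi) j (Finset.mem_range.1 hj) hij.le).2.2 hij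
      have h4 : (cut (i + 1) : ℝ) ≤ cut j := by exact_mod_cast h3
      have h5 : (cut (i + 1) / 1000 : ℝ) * N ≤ (cut j / 1000 : ℝ) * N := by gcongr
      linarith
    intro i hi j hj hij
    rcases lt_or_gt_of_ne hij with h | h
    · exact aux i hi j hj h
    · exact (aux j hj i hi h).symm

open Filter Topology in
lemma stair_lower : ∀ᶠ N : ℝ in atTop, N ^ 2 / 2 ≤ (gCount (N ^ 4) : ℝ) := by
  have h : ∀ᶠ N : ℝ in atTop, ∀ i ∈ Finset.range 120,
      (((cut (i + 1) / 1000 : ℝ) - cut i / 1000) * (top i / 1000) * (79457 / 200000) - 1 / 100000) *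
        N ^ 2 ≤ (stairBox N i).card := by
    rw [Finset.eventually_all]
    intro i hi
    have hm : (cut i : ℝ) ≤ cut (i + 1) := by
      exact_mod_cast (stair_mono i (Finset.mem_range.1 hi) i (Finset.mem_range.1 hi) le_rfl).2.1
    exact boxGood_lower (by positivity) (by gcongr) (by positivity) (by norm_num)
  filter_upwards [h, eventually_ge_atTop 0] with N h hN
  have h1 := Finset.sum_le_sum h
  have h2 : ((∑ i ∈ Finset.range 120, (stairBox N i).card : ℕ) : ℝ) ≤ gCount (N ^ 4) := by
    exact_mod_cast stair_card_le hN
  have h3 : ((1266000 : ℕ) : ℝ) ≤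
      ((∑ i ∈ Finset.range 120, (cut (i + 1) - cut i) * top i : ℕ) : ℝ) := by
    exact_mod_cast stair_area
  have h4 : ((∑ i ∈ Finset.range 120, (cut (i + 1) - cut i) * top i : ℕ) : ℝ) =
      ∑ i ∈ Finset.range 120, ((cut (i + 1) : ℝ) - cut i) * top i := by
    push_cast
    refine Finset.sum_congr rfl fun i hi => ?_
    rw [Nat.cast_sub
      (stair_mono i (Finset.mem_range.1 hi) i (Finset.mem_range.1 hi) le_rfl).2.1]
  have h5 : ∑ i ∈ Finset.range 120,
      (((cut (i + 1) / 1000 : ℝ) - cut i / 1000) * (top i / 1000) * (79457 / 200000) - 1 / 100000) *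
        N ^ 2 = ((∑ i ∈ Finset.range 120, ((cut (i + 1) : ℝ) - cut i) * top i) *
          (79457 / 200000 / 1000000) - 120 / 100000) * N ^ 2 := by
    rw [← Finset.sum_mul, Finset.sum_sub_distrib, Finset.sum_mul]
    congr 2
    · exact Finset.sum_congr rfl fun i _ => by ring
    · simp; norm_num
  rw [h5, ← h4] at h1
  push_cast at h1 h2 h3
  nlinarith [sq_nonneg N]

theorem gCount_bounds :
    ∃ C : ℝ, 0 < C ∧ ∀ᶠ x : ℝ in Filter.atTop,
      Real.sqrt x / 2 - C ≤ (gCount x : ℝ) ∧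
      (gCount x : ℝ) ≤ x ^ ((2 : ℝ) / 3) / (2 * (4 : ℝ) ^ ((1 : ℝ) / 3)) +
        C * x ^ ((5 : ℝ) / 9) := by
  refine ⟨10, by norm_num, ?_⟩
  have ht : Filter.Tendsto (fun x : ℝ => Real.sqrt (Real.sqrt x)) Filter.atTop Filter.atTop :=
    Real.tendsto_sqrt_atTop.comp Real.tendsto_sqrt_atTop
  filter_upwards [ht.eventually stair_lower, Filter.eventually_ge_atTop 1] with x h1 hx
  have h2 : Real.sqrt (Real.sqrt x) ^ 2 = Real.sqrt x := Real.sq_sqrt (Real.sqrt_nonneg x)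
  have h4 : Real.sqrt (Real.sqrt x) ^ 4 = x := by
    rw [show Real.sqrt (Real.sqrt x) ^ 4 = (Real.sqrt (Real.sqrt x) ^ 2) ^ 2 by ring, h2]
    exact Real.sq_sqrt (by linarith)
  rw [h2, h4] at h1
  refine ⟨by linarith, ?_⟩
  have h5 := gCount_upper hx
  have h6 : 0 ≤ x ^ ((2 : ℝ) / 3) / (2 * (4 : ℝ) ^ ((1 : ℝ) / 3)) := by positivity
  linarith
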